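/- arXiv:2012.13515 — 2 statements merged into one kernel-verified Lean document; each statement's English description precedes it below -/
import Mathlib

section
/- Let E ⊆ ℝ² be compact, ε > 0, x ∈ ∂E_ε, and let (x_n) be a sequence on ∂E_ε with x_n → x and x_n ≠ x for all n; set ξ_n := (x_n − x)/‖x_n − x‖. Then: (i) there exist ξ^{(1)}, ξ^{(2)} ∈ Ξ_ext(x) and a partition of the index set ℕ into two sets such that along each infinite set of the partition the sequence (ξ_n) converges, with limit ξ^{(1)} respectively ξ^{(2)}; (ii) if ξ := lim ξ_n exists, then (a) every sequence (y_n) with y_n ∈ Π_E(x_n) for all n has a subsequence converging to some y ∈ Π_ext(x) satisfying ⟨y − x, ξ⟩ = 0, and moreover ξ ∈ Ξ_ext(x); and (b) every sequence (η_n) with η_n ∈ Ξ_ext(x_n) for all n satisfies |⟨η_n, ξ⟩| → 1 as n → ∞. -/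
open Metric Set Filter Topology RealInnerProductSpace

noncomputable section

/-- The Euclidean plane. -/
abbrev Plane := EuclideanSpace ℝ (Fin 2)

/-- The closed ε-neighbourhood of a set `E ⊆ ℝ²`: the closure of the union of open
ε-balls centred at points of `E`. -/
def eNbhd (E : Set Plane) (ε : ℝ) : Set Plane :=
  closure (⋃ y ∈ E, ball y ε)

/-- The set of contributors of a boundary point `x ∈ ∂E_ε`: points `y ∈ ∂E` with
`‖y - x‖ = ε`. -/
def contributors (E : Set Plane) (ε : ℝ) (x : Plane) : Set Plane :=
  {y ∈ frontier E | ‖y - x‖ = ε}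

/-- The set of outward directions from `E_ε` at `x`. -/
def outwardDirs (E : Set Plane) (ε : ℝ) (x : Plane) : Set Plane :=
  {ξ | ‖ξ‖ = 1 ∧ ∃ u : ℕ → Plane, (∀ n, u n ∉ eNbhd E ε) ∧
    Tendsto u atTop (nhds x) ∧
    Tendsto (fun n => (‖u n - x‖)⁻¹ • (u n - x)) atTop (nhds ξ)}

/-- The set of extremal outward directions at `x`: outward directions perpendicular to
`y - x` for some contributor `y`. -/
def extOutward (E : Set Plane) (ε : ℝ) (x : Plane) : Set Plane :=
  {ξ ∈ outwardDirs E ε x | ∃ y ∈ contributors E ε x, ⟪y - x, ξ⟫ = 0}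

/-- The set of extremal contributors at `x`: contributors perpendicular to some
outward direction. -/
def extContrib (E : Set Plane) (ε : ℝ) (x : Plane) : Set Plane :=
  {y ∈ contributors E ε x | ∃ ξ ∈ outwardDirs E ε x, ⟪y - x, ξ⟫ = 0}

/-- The set of extremal pairs at `x`. -/
def extPairs (E : Set Plane) (ε : ℝ) (x : Plane) : Set (Plane × Plane) :=
  {p | p.1 ∈ outwardDirs E ε x ∧ p.2 ∈ contributors E ε x ∧ ⟪p.2 - x, p.1⟫ = 0}

/-- The set `Unp(E)` of boundary points of `E_ε` with a unique contributor. -/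
def unp (E : Set Plane) (ε : ℝ) : Set Plane :=
  {x ∈ frontier (eNbhd E ε) | ∃ y, contributors E ε x = {y}}

/-- A boundary point `x ∈ ∂E_ε` is smooth if `x ∈ Unp(E)` and a whole neighbourhood of
`x` on the boundary consists of points of `Unp(E)`. -/
def IsSmoothPt (E : Set Plane) (ε : ℝ) (x : Plane) : Prop :=
  x ∈ unp E ε ∧ ∃ r > 0, frontier (eNbhd E ε) ∩ ball x r ⊆ unp E ε

/-- A singularity: a non-smooth boundary point of `E_ε`. -/
def IsSingularity (E : Set Plane) (ε : ℝ) (x : Plane) : Prop :=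
  x ∈ frontier (eNbhd E ε) ∧ ¬ IsSmoothPt E ε x

/-- The open half-ball of radius `r` at `x` in direction `v`. -/
def halfBall (x v : Plane) (r : ℝ) : Set Plane :=
  {z ∈ ball x r | 0 < ⟪z - x, v⟫}

/-- `V` is a connected component of the complement of `E_ε`. -/
def IsCompOfCompl (E : Set Plane) (ε : ℝ) (V : Set Plane) : Prop :=
  ∃ z, z ∉ eNbhd E ε ∧ V = connectedComponentIn (eNbhd E ε)ᶜ z

/-- The closed geodesic arc-segment between `v, w ∈ S¹`. -/
def arcSeg (v w : Plane) : Set Plane :=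
  {u | ‖u‖ = 1 ∧ ∃ a b : ℝ, 0 ≤ a ∧ 0 ≤ b ∧ u = a • v + b • w}

/-- The open geodesic arc-segment between `v, w ∈ S¹`. -/
def openArc (v w : Plane) : Set Plane :=
  arcSeg v w \ {v, w}

/-- A chain sequence for `x`: a sequence of singularities converging to `x` whose
extremal contributors become increasingly opposed. -/
def IsChainSeq (E : Set Plane) (ε : ℝ) (x : Plane) (u : ℕ → Plane) : Prop :=
  (∀ n, IsSingularity E ε (u n)) ∧ (∀ n, u n ≠ x) ∧ Tendsto u atTop (nhds x) ∧
  ∃ y1 y2 : ℕ → Plane, (∀ n, extContrib E ε (u n) = {y1 n, y2 n}) ∧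
    Tendsto (fun n => ⟪ε⁻¹ • (y1 n - u n), ε⁻¹ • (y2 n - u n)⟫) atTop (nhds (-1))

/-- Type S1: wedge. -/
def IsWedge (E : Set Plane) (ε : ℝ) (x : Plane) : Prop :=
  IsSingularity E ε x ∧
  ∃ ξ₁ ξ₂, extOutward E ε x = {ξ₁, ξ₂} ∧ ξ₁ ≠ ξ₂ ∧ ξ₁ ≠ -ξ₂

/-- Type S2: one-sided sharp singularity. -/
def IsSharp (E : Set Plane) (ε : ℝ) (x : Plane) : Prop :=
  IsSingularity E ε x ∧ (∃ ξ, extOutward E ε x = {ξ}) ∧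
  ∃ δ > 0, IsConnected (ball x δ ∩ (eNbhd E ε)ᶜ)

/-- Type S3: sharp-sharp singularity. -/
def IsSharpSharp (E : Set Plane) (ε : ℝ) (x : Plane) : Prop :=
  IsSingularity E ε x ∧ ∃ ξ, extOutward E ε x = {ξ, -ξ} ∧
    ∀ η ∈ ({ξ, -ξ} : Set Plane), ∃ δ > 0, IsConnected (halfBall x η δ ∩ (eNbhd E ε)ᶜ)

/-- Type S4: one-sided shallow singularity. -/
def IsShallow (E : Set Plane) (ε : ℝ) (x : Plane) : Prop :=
  IsSingularity E ε x ∧ x ∈ unp E ε ∧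
  ∃ ξ₁ ξ₂, extOutward E ε x = {ξ₁, ξ₂} ∧
    (∃ δ > 0, halfBall x ξ₁ δ ∩ frontier (eNbhd E ε) ⊆ unp E ε) ∧
    (∀ δ > 0, ¬ (halfBall x ξ₂ δ ∩ frontier (eNbhd E ε) ⊆ unp E ε))

/-- Type S5: shallow-shallow singularity. -/
def IsShallowShallow (E : Set Plane) (ε : ℝ) (x : Plane) : Prop :=
  IsSingularity E ε x ∧ x ∈ unp E ε ∧
  ∃ ξ₁ ξ₂, extOutward E ε x = {ξ₁, ξ₂} ∧
    ∀ η ∈ ({ξ₁, ξ₂} : Set Plane), ∀ δ > 0,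
      ¬ (halfBall x η δ ∩ frontier (eNbhd E ε) ⊆ unp E ε)

/-- Type S6: one-sided chain singularity. -/
def IsChainSing (E : Set Plane) (ε : ℝ) (x : Plane) : Prop :=
  IsSingularity E ε x ∧ (∃ ξ, extOutward E ε x = {ξ}) ∧
  ∃ u, IsChainSeq E ε x u

/-- Type S7: chain-chain singularity. -/
def IsChainChain (E : Set Plane) (ε : ℝ) (x : Plane) : Prop :=
  IsSingularity E ε x ∧ ∃ ξ, extOutward E ε x = {ξ, -ξ} ∧
    ∀ η ∈ ({ξ, -ξ} : Set Plane), ∃ δ > 0, ∃ u,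
      IsChainSeq E ε x u ∧ ∀ n, u n ∈ halfBall x η δ

/-- Type S8: sharp-chain singularity. -/
def IsSharpChain (E : Set Plane) (ε : ℝ) (x : Plane) : Prop :=
  IsSingularity E ε x ∧ ∃ ξ, extOutward E ε x = {ξ, -ξ} ∧
    (∃ δ > 0, IsConnected (halfBall x ξ δ ∩ (eNbhd E ε)ᶜ)) ∧
    (∃ δ > 0, ∃ u, IsChainSeq E ε x u ∧ ∀ n, u n ∈ halfBall x (-ξ) δ)

abbrev dirOf (x w : Plane) : Plane := (‖w - x‖)⁻¹ • (w - x)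

lemma ball_sub_eNbhd {E : Set Plane} {ε : ℝ} {y : Plane} (hy : y ∈ E) :
    ball y ε ⊆ eNbhd E ε :=
  (subset_biUnion_of_mem (u := fun y => ball y ε) hy).trans subset_closure

lemma far_of_not_mem {E : Set Plane} {ε : ℝ} {y w : Plane} (hy : y ∈ E)
    (hw : w ∉ eNbhd E ε) : ε ≤ ‖y - w‖ := by
  by_contra h
  push Not at h
  exact hw (ball_sub_eNbhd hy (by rwa [mem_ball, dist_comm, dist_eq_norm]))

lemma far_of_frontier {E : Set Plane} {ε : ℝ} {y w : Plane} (hy : y ∈ E)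
    (hw : w ∈ frontier (eNbhd E ε)) : ε ≤ ‖y - w‖ := by
  by_contra h
  push Not at h
  exact hw.2 (interior_maximal (ball_sub_eNbhd hy) isOpen_ball
    (by rwa [mem_ball, dist_comm, dist_eq_norm]))

lemma frontier_mem {E : Set Plane} {ε : ℝ} {w : Plane}
    (hw : w ∈ frontier (eNbhd E ε)) : w ∈ eNbhd E ε := by
  have : IsClosed (eNbhd E ε) := isClosed_closure
  exact this.frontier_subset hw

lemma exists_contrib {E : Set Plane} (hE : IsCompact E) {ε : ℝ} (hε : 0 < ε) {x : Plane}
    (hx : x ∈ frontier (eNbhd E ε)) : ∃ y, y ∈ contributors E ε x := by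
  have h1 : x ∈ cthickening ε E := by
    have : eNbhd E ε ⊆ cthickening ε E := by
      apply closure_minimal _ isClosed_cthickening
      apply iUnion₂_subset
      intro y hy
      exact ball_subset_closedBall.trans (closedBall_subset_cthickening hy ε)
    exact this (frontier_mem hx)
  rw [hE.cthickening_eq_biUnion_closedBall hε.le] at h1
  simp only [mem_iUnion] at h1
  obtain ⟨y, hy, hxy⟩ := h1
  rw [mem_closedBall, dist_comm, dist_eq_norm] at hxy
  refine ⟨y, ⟨subset_closure hy, fun hint => ?_⟩, le_antisymm hxy (far_of_frontier hy hx)⟩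
  have hd : Disjoint (ball x ε) (interior E) := by
    rw [Set.disjoint_left]
    intro z hz hz'
    have := far_of_frontier (interior_subset hz') hx
    rw [mem_ball, dist_eq_norm] at hz
    linarith
  have hd2 := hd.closure_left isOpen_interior
  rw [closure_ball x hε.ne'] at hd2
  exact Set.disjoint_left.1 hd2 (by rwa [mem_closedBall, dist_eq_norm]) hint

lemma contrib_mem {E : Set Plane} (hE : IsCompact E) {ε : ℝ} {x y : Plane}
    (hy : y ∈ contributors E ε x) : y ∈ E := hE.isClosed.frontier_subset hy.1

lemma dir_ineq {ε : ℝ} {x y w : Plane} (h1 : ‖y - x‖ ≤ ε) (hε : 0 < ε) (h2 : ε ≤ ‖y - w‖) :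
    2 * ⟪y - x, dirOf x w⟫ ≤ ‖w - x‖ := by
  have e : ‖y - w‖ ^ 2 = ‖y - x‖ ^ 2 - 2 * ⟪y - x, w - x⟫ + ‖w - x‖ ^ 2 := by
    rw [← norm_sub_sq_real]; congr 2; abel
  have a1 : ‖y - x‖ ^ 2 ≤ ε ^ 2 := by gcongr
  have a2 : ε ^ 2 ≤ ‖y - w‖ ^ 2 := by gcongr
  rw [dirOf, inner_smul_right]
  rcases (norm_nonneg (w - x)).eq_or_lt with h | h
  · rw [← h]; simp
  · have : ‖w - x‖ * (2 * (‖w - x‖⁻¹ * ⟪y - x, w - x⟫)) ≤ ‖w - x‖ * ‖w - x‖ := by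
      have : ‖w - x‖ * (2 * (‖w - x‖⁻¹ * ⟪y - x, w - x⟫)) = 2 * ⟪y - x, w - x⟫ := by
        field_simp
      rw [this]; nlinarith
    exact le_of_mul_le_mul_left this h

lemma norm_tendsto_zero {x : Plane} {w : ℕ → Plane} (hw : Tendsto w atTop (𝓝 x)) :
    Tendsto (fun n => ‖w n - x‖) atTop (𝓝 0) := by
  simpa using (hw.sub_const x).norm

lemma inner_nonpos_lim {ε : ℝ} (hε : 0 < ε) {x y ζ : Plane} {w : ℕ → Plane}
    (hw : Tendsto w atTop (𝓝 x)) (hζ : Tendsto (fun n => dirOf x (w n)) atTop (𝓝 ζ))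
    (h1 : ‖y - x‖ = ε) (h2 : ∀ n, ε ≤ ‖y - w n‖) : ⟪y - x, ζ⟫ ≤ 0 := by
  have := le_of_tendsto_of_tendsto' ((tendsto_const_nhds.inner hζ).const_mul 2)
    (norm_tendsto_zero hw) (fun n => dir_ineq h1.le hε (h2 n))
  linarith

lemma key_lim {E : Set Plane} (hE : IsCompact E) {ε : ℝ} (hε : 0 < ε) {x : Plane}
    (hx : x ∈ frontier (eNbhd E ε)) {u : ℕ → Plane}
    (hmem : ∀ n, u n ∈ frontier (eNbhd E ε))
    (hconv : Tendsto u atTop (𝓝 x)) {ξ : Plane}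
    (hξ : Tendsto (fun n => dirOf x (u n)) atTop (𝓝 ξ)) {ys : ℕ → Plane}
    (hys : ∀ n, ys n ∈ contributors E ε (u n)) {y : Plane} (hy : Tendsto ys atTop (𝓝 y)) :
    y ∈ contributors E ε x ∧ ⟪y - x, ξ⟫ = 0 := by
  have hyc : y ∈ contributors E ε x := by
    refine ⟨isClosed_frontier.mem_of_tendsto hy (Eventually.of_forall fun n => (hys n).1), ?_⟩
    refine tendsto_nhds_unique (hy.sub hconv).norm ?_
    simp only [(hys _).2]
    exact tendsto_const_nhds
  refine ⟨hyc, le_antisymm ?_ ?_⟩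
  · exact inner_nonpos_lim hε hconv hξ hyc.2 (fun n => far_of_frontier (contrib_mem hE hyc) (hmem n))
  · have h : ∀ n, 2 * ⟪ys n - u n, - dirOf x (u n)⟫ ≤ ‖u n - x‖ := by
      intro n
      have := dir_ineq (hys n).2.le hε (far_of_frontier (contrib_mem hE (hys n)) hx)
      have e : dirOf (u n) x = - dirOf x (u n) := by
        rw [dirOf, dirOf, norm_sub_rev, ← smul_neg, neg_sub]
      rwa [e, norm_sub_rev] at this
    have := le_of_tendsto_of_tendsto' (((hy.sub hconv).inner hξ.neg).const_mul 2)
      (norm_tendsto_zero hconv) h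
    rw [inner_neg_right] at this
    linarith

lemma norm_dirOf {x w : Plane} (h : w ≠ x) : ‖dirOf x w‖ = 1 := by
  have : ‖w - x‖ ≠ 0 := by simpa [sub_eq_zero] using h
  rw [dirOf, norm_smul, norm_inv, norm_norm, inv_mul_cancel₀ this]

lemma outward_of_lim {E : Set Plane} {ε : ℝ} {x : Plane}
    {u : ℕ → Plane}
    (hmem : ∀ n, u n ∈ frontier (eNbhd E ε)) (hne : ∀ n, u n ≠ x)
    (hconv : Tendsto u atTop (𝓝 x)) {ξ : Plane}
    (hξ : Tendsto (fun n => dirOf x (u n)) atTop (𝓝 ξ)) : ξ ∈ outwardDirs E ε x := by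
  have hpos : ∀ n, 0 < ‖u n - x‖ := fun n => norm_pos_iff.2 (sub_ne_zero.2 (hne n))
  have hd : ∀ n : ℕ, ∃ w, w ∉ eNbhd E ε ∧ ‖w - u n‖ < ‖u n - x‖ * (1 / ((n : ℝ) + 1)) := by
    intro n
    have h := hmem n
    rw [frontier_eq_closure_inter_closure] at h
    obtain ⟨w, hw, hd⟩ := Metric.mem_closure_iff.1 h.2 (‖u n - x‖ * (1 / ((n : ℝ) + 1)))
      (mul_pos (hpos n) (by positivity))
    exact ⟨w, hw, by rwa [dist_comm, dist_eq_norm] at hd⟩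
  choose w hw hwd using hd
  -- relative error
  have hr : Tendsto (fun n => ‖u n - x‖⁻¹ • (w n - u n)) atTop (𝓝 0) := by
    refine squeeze_zero_norm (fun n => ?_) tendsto_one_div_add_atTop_nhds_zero_nat
    rw [norm_smul, norm_inv, norm_norm, inv_mul_le_iff₀ (hpos n)]
    exact (hwd n).le
  have hv : Tendsto (fun n => ‖u n - x‖⁻¹ • (w n - x)) atTop (𝓝 ξ) := by
    have := hr.add hξ
    rw [zero_add] at this
    refine this.congr fun n => ?_
    rw [dirOf, ← smul_add]; congr 1; abel
  have hn1 : ‖ξ‖ = 1 := by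
    refine tendsto_nhds_unique hξ.norm ?_
    simp only [norm_dirOf (hne _)]
    exact tendsto_const_nhds
  refine ⟨hn1, w, hw, ?_, ?_⟩
  · have h0 := (norm_tendsto_zero hconv).smul hv
    rw [zero_smul] at h0
    have h1 := h0.add_const x
    rw [zero_add] at h1
    refine h1.congr fun n => ?_
    rw [smul_inv_smul₀ (hpos n).ne', sub_add_cancel]
  · have h0 := (hv.norm.inv₀ (by rw [hn1]; exact one_ne_zero)).smul hv
    rw [hn1, inv_one, one_smul] at h0
    refine h0.congr fun n => ?_
    have := (hpos n).ne'
    rw [norm_smul, norm_inv, norm_norm, smul_smul]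
    congr 1
    rw [mul_inv, inv_inv, mul_comm (‖u n - x‖), mul_assoc, mul_inv_cancel₀ this, mul_one]

lemma ext_of_lim {E : Set Plane} (hE : IsCompact E) {ε : ℝ} (hε : 0 < ε) {x : Plane}
    (hx : x ∈ frontier (eNbhd E ε)) {u : ℕ → Plane}
    (hmem : ∀ n, u n ∈ frontier (eNbhd E ε)) (hne : ∀ n, u n ≠ x)
    (hconv : Tendsto u atTop (𝓝 x)) {ξ : Plane}
    (hξ : Tendsto (fun n => dirOf x (u n)) atTop (𝓝 ξ)) : ξ ∈ extOutward E ε x := by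
  refine ⟨outward_of_lim hmem hne hconv hξ, ?_⟩
  choose ys hys using fun n => exists_contrib hE hε (hmem n)
  obtain ⟨y, -, φ, hφ, hy⟩ := hE.tendsto_subseq (fun n => contrib_mem hE (hys n))
  have := key_lim hE hε hx (fun n => hmem (φ n)) (hconv.comp hφ.tendsto_atTop)
    (hξ.comp hφ.tendsto_atTop) (fun n => hys (φ n)) hy
  exact ⟨y, this⟩

lemma inner_coord (a b : Plane) : ⟪a, b⟫ = a 0 * b 0 + a 1 * b 1 := by
  simp [PiLp.inner_apply, Fin.sum_univ_two]; ring

lemma norm_coord (a : Plane) : ‖a‖ ^ 2 = a 0 ^ 2 + a 1 ^ 2 := by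
  rw [← real_inner_self_eq_norm_sq, inner_coord]; ring

def det2 (a b : Plane) : ℝ := a 0 * b 1 - a 1 * b 0

lemma det2_sign {k ζ a b : Plane} (hk : k ≠ 0) (hζ : ‖ζ‖ = 1) (h : ⟪k, ζ⟫ = 0)
    (ha : ⟪k, a⟫ ≤ 0) (hb : ⟪k, b⟫ ≤ 0) : 0 ≤ det2 ζ a * det2 ζ b := by
  have hk2 : 0 < ‖k‖ ^ 2 := by positivity
  have hz : ‖ζ‖ ^ 2 = 1 := by rw [hζ]; norm_num
  rw [norm_coord] at hk2 hz
  rw [inner_coord] at h ha hb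
  set s := det2 ζ k with hs
  have k0 : k 0 = - s * ζ 1 := by rw [hs, det2]; linear_combination (-k 0) * hz + ζ 0 * h
  have k1 : k 1 = s * ζ 0 := by rw [hs, det2]; linear_combination (-k 1) * hz + ζ 1 * h
  have hs0 : s ≠ 0 := by
    intro h0
    rw [k0, k1, h0] at hk2; simp at hk2
  have e : (k 0 * a 0 + k 1 * a 1) * (k 0 * b 0 + k 1 * b 1)
      = s ^ 2 * (det2 ζ a * det2 ζ b) := by
    rw [k0, k1, det2, det2]; ring
  have : 0 ≤ s ^ 2 * (det2 ζ a * det2 ζ b) := by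
    rw [← e]; exact mul_nonneg_of_nonpos_of_nonpos ha hb
  exact nonneg_of_mul_nonneg_right this (by positivity)

lemma det2_zero {a b : Plane} (ha : ‖a‖ = 1) (hb : ‖b‖ = 1) (h : det2 a b = 0) :
    b = a ∨ b = -a := by
  have ha2 : ‖a‖ ^ 2 = 1 := by rw [ha]; norm_num
  have hb2 : ‖b‖ ^ 2 = 1 := by rw [hb]; norm_num
  rw [norm_coord] at ha2 hb2
  rw [det2] at h
  set c := a 0 * b 0 + a 1 * b 1 with hc
  have b0 : b 0 = c * a 0 := by rw [hc]; linear_combination (-b 0) * ha2 - a 1 * h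
  have b1 : b 1 = c * a 1 := by rw [hc]; linear_combination (-b 1) * ha2 + a 0 * h
  have c2 : c ^ 2 = 1 := by
    rw [b0, b1] at hb2; linear_combination hb2 - c ^ 2 * ha2
  rcases (show c = 1 ∨ c = -1 by simpa using c2) with h1 | h1
  · left; ext i; fin_cases i <;> simp [b0, b1, h1]
  · right; ext i; fin_cases i <;> simp [b0, b1, h1]

lemma three_vec {a b c : Plane} (ha : ‖a‖ = 1) (hb : ‖b‖ = 1) (hc : ‖c‖ = 1)
    (h1 : 0 ≤ det2 a b * det2 a c) (h2 : 0 ≤ det2 b a * det2 b c)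
    (h3 : 0 ≤ det2 c a * det2 c b) : b = a ∨ c = a ∨ c = b := by
  have anti : ∀ p q, det2 p q = - det2 q p := fun p q => by simp only [det2]; ring
  -- if two are opposite, conclude
  have opp : ∀ p q r : Plane, ‖p‖ = 1 → ‖r‖ = 1 → q = -p →
      0 ≤ det2 r p * det2 r q → r = p ∨ r = q := by
    intro p q r hp hr hq h
    have e : det2 r q = - det2 r p := by rw [hq]; simp [det2]; ring
    rw [e] at h
    have h0 : det2 r p = 0 := by nlinarith
    rw [anti, neg_eq_zero] at h0
    rw [hq]; exact det2_zero hp hr h0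
  by_cases hab : det2 a b = 0
  · rcases det2_zero ha hb hab with h | h
    · exact Or.inl h
    · rcases opp a b c ha hc h h3 with h | h <;> simp [h]
  by_cases hac : det2 a c = 0
  · rcases det2_zero ha hc hac with h | h
    · simp [h]
    · rcases opp a c b ha hb h h2 with h | h <;> simp [h]
  by_cases hbc : det2 b c = 0
  · rcases det2_zero hb hc hbc with h | h
    · simp [h]
    · rcases opp b c a hb ha h h1 with h | h <;> simp [h]
  exfalso
  rw [anti b a] at h2
  rw [anti c a, anti c b] at h3
  have p1 : 0 < det2 a b * det2 a c := lt_of_le_of_ne h1 (mul_ne_zero hab hac).symm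
  have p2 : 0 ≤ -(det2 a b ^ 2 * (det2 a c * det2 b c)) * det2 a c ^ 0 := by
    have := mul_nonneg h2 h1
    have p3 : 0 ≤ det2 a b ^ 2 * -(det2 a c * det2 b c) := by nlinarith
    simpa using p3
  have p4 : 0 < det2 a b ^ 2 * (det2 a c * det2 b c) :=
    mul_pos (by positivity) (lt_of_le_of_ne (by linarith) (mul_ne_zero hac hbc).symm)
  simp at p2
  linarith

lemma ext_inner_nonpos {E : Set Plane} (hE : IsCompact E) {ε : ℝ} (hε : 0 < ε) {x y ζ : Plane}
    (hy : y ∈ contributors E ε x) (hζ : ζ ∈ outwardDirs E ε x) : ⟪y - x, ζ⟫ ≤ 0 := by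
  obtain ⟨-, w, hw, hwx, hd⟩ := hζ
  exact inner_nonpos_lim hε hwx hd hy.2 (fun n => far_of_not_mem (contrib_mem hE hy) (hw n))

lemma ext_three {E : Set Plane} (hE : IsCompact E) {ε : ℝ} (hε : 0 < ε) {x a b c : Plane}
    (ha : a ∈ extOutward E ε x) (hb : b ∈ extOutward E ε x) (hc : c ∈ extOutward E ε x) :
    b = a ∨ c = a ∨ c = b := by
  have key : ∀ p q r, p ∈ extOutward E ε x → q ∈ extOutward E ε x → r ∈ extOutward E ε x →
      0 ≤ det2 p q * det2 p r := by
    rintro p q r ⟨hp, y, hy, hyp⟩ hq hr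
    have hk : y - x ≠ 0 := by
      intro h
      have := hy.2
      rw [h, norm_zero] at this
      exact hε.ne this
    exact det2_sign hk hp.1 hyp (ext_inner_nonpos hE hε hy hq.1) (ext_inner_nonpos hE hε hy hr.1)
  exact three_vec ha.1.1 hb.1.1 hc.1.1 (key a b c ha hb hc) (key b a c hb ha hc) (key c a b hc ha hb)

lemma ext_pair {E : Set Plane} (hE : IsCompact E) {ε : ℝ} (hε : 0 < ε) {x a : Plane}
    (ha : a ∈ extOutward E ε x) :
    ∃ b ∈ extOutward E ε x, ∀ c ∈ extOutward E ε x, c = a ∨ c = b := by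
  by_cases h : ∃ b ∈ extOutward E ε x, b ≠ a
  · obtain ⟨b, hb, hba⟩ := h
    exact ⟨b, hb, fun c hc => (ext_three hE hε ha hb hc).resolve_left hba⟩
  · push Not at h
    exact ⟨a, ha, fun c hc => Or.inl (h c hc)⟩

lemma planar_pyth {k η ξ : Plane} {ε : ℝ} (hε : 0 < ε) (hk : ‖k‖ = ε) (hη : ‖η‖ = 1)
    (hξ : ‖ξ‖ = 1) (h : ⟪k, η⟫ = 0) : |⟪η, ξ⟫| = √(1 - (ε⁻¹ * ⟪k, ξ⟫) ^ 2) := by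
  rw [← Real.sqrt_sq_eq_abs]
  congr 1
  have hk2 : ‖k‖ ^ 2 = ε ^ 2 := by rw [hk]
  have hn2 : ‖η‖ ^ 2 = 1 := by rw [hη]; norm_num
  have hz2 : ‖ξ‖ ^ 2 = 1 := by rw [hξ]; norm_num
  rw [norm_coord] at hk2 hn2 hz2
  rw [inner_coord] at h
  rw [inner_coord, inner_coord]
  set s := det2 η k with hs
  have k0 : k 0 = - s * η 1 := by rw [hs, det2]; linear_combination (-k 0) * hn2 + η 0 * h
  have k1 : k 1 = s * η 0 := by rw [hs, det2]; linear_combination (-k 1) * hn2 + η 1 * h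
  rw [k0, k1] at hk2
  have s2 : s ^ 2 = ε ^ 2 := by linear_combination hk2 - s ^ 2 * hn2
  have e : (ε⁻¹ * (k 0 * ξ 0 + k 1 * ξ 1)) ^ 2 = (η 0 * ξ 1 - η 1 * ξ 0) ^ 2 := by
    have : (ε⁻¹ * (k 0 * ξ 0 + k 1 * ξ 1)) ^ 2
      = (ε⁻¹) ^ 2 * s ^ 2 * (η 0 * ξ 1 - η 1 * ξ 0) ^ 2 := by rw [k0, k1]; ring
    rw [this, s2, ← mul_pow, inv_mul_cancel₀ hε.ne']; ring
  rw [e]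
  linear_combination (ξ 0 ^ 2 + ξ 1 ^ 2) * hn2 + hz2

/-- Orientation in converging sequences of boundary points. -/
theorem orientation_in_converging_sequences (E : Set Plane) (hE : IsCompact E) {ε : ℝ}
    (hε : 0 < ε) (x : Plane) (hx : x ∈ frontier (eNbhd E ε)) (u : ℕ → Plane)
    (hmem : ∀ n, u n ∈ frontier (eNbhd E ε)) (hne : ∀ n, u n ≠ x)
    (hconv : Tendsto u atTop (nhds x)) :
    -- (i) splitting into two subsequences converging to extremal outward directions
    (∃ ξ₁ ξ₂, ξ₁ ∈ extOutward E ε x ∧ ξ₂ ∈ extOutward E ε x ∧ ∃ S : Set ℕ,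
      (S.Infinite →
        Tendsto (fun n => (‖u n - x‖)⁻¹ • (u n - x)) (atTop ⊓ 𝓟 S) (nhds ξ₁)) ∧
      (Sᶜ.Infinite →
        Tendsto (fun n => (‖u n - x‖)⁻¹ • (u n - x)) (atTop ⊓ 𝓟 Sᶜ) (nhds ξ₂))) ∧
    -- (ii) behaviour when the directions converge to a limit ξ
    (∀ ξ : Plane, Tendsto (fun n => (‖u n - x‖)⁻¹ • (u n - x)) atTop (nhds ξ) →
      -- (a) contributor sequences subconverge to extremal contributors, and ξ is extremal
      (∀ ys : ℕ → Plane, (∀ n, ys n ∈ contributors E ε (u n)) →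
        ∃ y ∈ extContrib E ε x, ⟪y - x, ξ⟫ = 0 ∧
          ∃ φ : ℕ → ℕ, StrictMono φ ∧ Tendsto (ys ∘ φ) atTop (nhds y)) ∧
      ξ ∈ extOutward E ε x ∧
      -- (b) extremal outward directions at u n align with ξ asymptotically
      (∀ ηs : ℕ → Plane, (∀ n, ηs n ∈ extOutward E ε (u n)) →
        Tendsto (fun n => |⟪ηs n, ξ⟫|) atTop (nhds 1))) := by
  have hcl : ∀ ξ : Plane, MapClusterPt ξ atTop (fun n => dirOf x (u n)) →
      ξ ∈ extOutward E ε x := by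
    intro ξ hξ
    obtain ⟨φ, hφ, hlim⟩ := MapClusterPt.tendsto_subseq hξ
    exact ext_of_lim hE hε hx (fun n => hmem (φ n)) (fun n => hne (φ n))
      (hconv.comp hφ.tendsto_atTop) hlim
  have hsph : ∀ n, dirOf x (u n) ∈ sphere (0 : Plane) 1 := fun n => by
    rw [mem_sphere_zero_iff_norm]; exact norm_dirOf (hne n)
  have hcpt : IsCompact (sphere (0 : Plane) 1) := isCompact_sphere 0 1
  refine ⟨?_, ?_⟩
  · obtain ⟨ξ₁, -, φ, hφ, hlim⟩ := hcpt.tendsto_subseq hsph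
    have h₁ : ξ₁ ∈ extOutward E ε x := ext_of_lim hE hε hx (fun n => hmem (φ n))
      (fun n => hne (φ n)) (hconv.comp hφ.tendsto_atTop) hlim
    obtain ⟨ξ₂, h₂, hall⟩ := ext_pair hE hε h₁
    have aux : ∀ (T : Set ℕ) (p q : Plane),
        (∀ c ∈ extOutward E ε x, c = p ∨ c = q) →
        (∀ n ∈ T, dist (dirOf x (u n)) p ≤ dist (dirOf x (u n)) q) →
        Tendsto (fun n => dirOf x (u n)) (atTop ⊓ 𝓟 T) (𝓝 p) := by
      intro T p q hpq hT
      refine hcpt.tendsto_nhds_of_unique_mapClusterPt (Eventually.of_forall hsph) ?_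
      intro c _ hc
      have hclosed : IsClosed {z : Plane | dist z p ≤ dist z q} :=
        isClosed_le (by fun_prop) (by fun_prop)
      have hc' : dist c p ≤ dist c q := by
        have hm : ∀ᶠ n in atTop ⊓ 𝓟 T, dirOf x (u n) ∈ {z : Plane | dist z p ≤ dist z q} :=
          eventually_inf_principal.2 (Eventually.of_forall hT)
        exact hclosed.mem_of_mapClusterPt hc hm
      rcases hpq c (hcl c (hc.mono inf_le_left)) with h | h
      · exact h
      · rw [h, dist_self] at hc'
        rw [h]; exact dist_le_zero.1 hc'
    refine ⟨ξ₁, ξ₂, h₁, h₂, {n | dist (dirOf x (u n)) ξ₁ ≤ dist (dirOf x (u n)) ξ₂},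
      fun _ => aux _ ξ₁ ξ₂ hall fun n hn => hn,
      fun _ => aux _ ξ₂ ξ₁ (fun c hc => (hall c hc).symm) fun n hn => ?_⟩
    rw [mem_compl_iff, mem_setOf_eq, not_le] at hn; exact hn.le
  · intro ξ hξ
    have hext : ξ ∈ extOutward E ε x := ext_of_lim hE hε hx hmem hne hconv hξ
    have hsub : ∀ ys : ℕ → Plane, (∀ n, ys n ∈ contributors E ε (u n)) →
        ∀ ψ : ℕ → ℕ, Tendsto ψ atTop atTop →
        ∃ y ∈ contributors E ε x, ⟪y - x, ξ⟫ = 0 ∧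
          ∃ φ : ℕ → ℕ, StrictMono φ ∧ Tendsto (fun n => ys (ψ (φ n))) atTop (𝓝 y) := by
      intro ys hys ψ hψ
      obtain ⟨y, -, φ, hφ, hy⟩ := hE.tendsto_subseq (fun n => contrib_mem hE (hys (ψ n)))
      have ht := hψ.comp hφ.tendsto_atTop
      have := key_lim hE hε hx (fun n => hmem (ψ (φ n))) (hconv.comp ht)
        (hξ.comp ht) (fun n => hys (ψ (φ n))) hy
      exact ⟨y, this.1, this.2, φ, hφ, hy⟩
    refine ⟨?_, hext, ?_⟩
    · intro ys hys
      obtain ⟨y, hy, hyξ, φ, hφ, hlim⟩ := hsub ys hys id tendsto_id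
      exact ⟨y, ⟨hy, ξ, hext.1, hyξ⟩, hyξ, φ, hφ, hlim⟩
    · intro ηs hηs
      choose hout ys hys hperp using hηs
      have h0 : Tendsto (fun n => ⟪ys n - u n, ξ⟫) atTop (𝓝 0) := by
        refine tendsto_of_subseq_tendsto fun ψ hψ => ?_
        obtain ⟨y, hy, hyξ, φ, hφ, hlim⟩ := hsub ys hys ψ hψ
        refine ⟨φ, ?_⟩
        rw [← hyξ]
        exact (hlim.sub (hconv.comp (hψ.comp hφ.tendsto_atTop))).inner tendsto_const_nhds
      have h1 : Tendsto (fun n => √(1 - (ε⁻¹ * ⟪ys n - u n, ξ⟫) ^ 2)) atTop (𝓝 1) := by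
        have := (((h0.const_mul ε⁻¹).pow 2).const_sub 1).sqrt
        simpa using this
      refine h1.congr fun n => ?_
      exact (planar_pyth hε (hys n).2 (hout n).1 hext.1.1 (hperp n)).symm

end
end

section
/- Let E ⊆ ℝ² be compact, ε > 0, and let x ∈ ∂E_ε with Ξ_ext(x) = {ξ₁, ξ₂} (allowing ξ₁ = ξ₂). Then for every δ > 0 there exists r > 0 such that for all z ∈ B_r(x): z ∈ E_ε if and only if either z ∉ closure(U_r(x, ξ₁)) ∪ closure(U_r(x, ξ₂)), or z lies in the closed ε-neighbourhood of E ∩ B_δ(Π_ext(x)), i.e. z ∈ closure(⋃ {B_ε(y) : y ∈ E with dist(y, Π_ext(x)) < δ}). -/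
open Metric Set Filter Topology RealInnerProductSpace

noncomputable section

/-- membership in the neighbourhood -/
lemma mem_eNbhd_iff {E : Set Plane} (hE : IsCompact E) {ε : ℝ} (hε : 0 < ε) (z : Plane) :
    z ∈ eNbhd E ε ↔ ∃ y ∈ E, dist z y ≤ ε := by
  constructor
  · intro h
    have hcl : IsClosed (cthickening ε E) := isClosed_cthickening
    have hsub : (⋃ y ∈ E, ball y ε) ⊆ cthickening ε E := by
      rw [← thickening_eq_biUnion_ball]
      exact thickening_subset_cthickening _ _
    have h2 : z ∈ cthickening ε E := closure_minimal hsub hcl h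
    rw [hE.cthickening_eq_biUnion_closedBall hε.le] at h2
    simp only [mem_iUnion, mem_closedBall, exists_prop] at h2
    exact h2
  · rintro ⟨y, hy, hd⟩
    have h1 : z ∈ closure (ball y ε) := by
      rw [closure_ball y hε.ne']; exact hd
    exact closure_mono (subset_biUnion_of_mem (u := fun y => ball y ε) hy) h1

/-- points of E are at distance at least ε -/
lemma eps_le {E : Set Plane} {ε : ℝ} {x : Plane}
    (hx : x ∈ frontier (eNbhd E ε)) {y : Plane} (hy : y ∈ E) : ε ≤ ‖y - x‖ := by
  by_contra h
  push Not at h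
  apply hx.2
  have h1 : ball y ε ⊆ eNbhd E ε :=
    (subset_biUnion_of_mem (u := fun y => ball y ε) hy).trans subset_closure
  apply interior_maximal h1 isOpen_ball
  rw [mem_ball, dist_comm, dist_eq_norm]; exact h

lemma mem_contributors_iff {E : Set Plane} (hE : IsCompact E) {ε : ℝ} (hε : 0 < ε) {x : Plane}
    (hx : x ∈ frontier (eNbhd E ε)) (y : Plane) :
    y ∈ contributors E ε x ↔ y ∈ E ∧ ‖y - x‖ = ε := by
  constructor
  · rintro ⟨h1, h2⟩
    exact ⟨hE.isClosed.frontier_subset h1, h2⟩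
  · rintro ⟨h1, h2⟩
    refine ⟨⟨subset_closure h1, ?_⟩, h2⟩
    intro hi
    have hc : Tendsto (fun t : ℝ => y + t • (x - y)) (𝓝[>] 0) (𝓝 y) := by
      have : ContinuousAt (fun t : ℝ => y + t • (x - y)) 0 := by fun_prop
      have h3 := this.tendsto
      simp only [zero_smul, add_zero] at h3
      exact h3.mono_left nhdsWithin_le_nhds
    have h4 := hc.eventually (mem_interior_iff_mem_nhds.1 hi)
    have h5 : ∀ᶠ t : ℝ in 𝓝[>] 0, t ∈ Ioo (0:ℝ) 1 := Ioo_mem_nhdsGT one_pos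
    obtain ⟨t, ht, ht2⟩ := (h4.and h5).exists
    have h6 := eps_le hx (show y + t • (x - y) ∈ E from ht)
    have h7 : y + t • (x - y) - x = (1 - t) • (y - x) := by module
    rw [h7, norm_smul, h2, Real.norm_of_nonneg (by linarith [ht2.2])] at h6
    nlinarith [ht2.1]

lemma limit_contrib {E : Set Plane} (hE : IsCompact E) {ε : ℝ} (hε : 0 < ε) {x : Plane}
    (hx : x ∈ frontier (eNbhd E ε)) {t : ℕ → ℝ} {e y : ℕ → Plane} {ζ w : Plane}
    (ht : ∀ n, 0 < t n) (ht0 : Tendsto t atTop (𝓝 0)) (he : Tendsto e atTop (𝓝 ζ))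
    (hyE : ∀ n, y n ∈ E) (hy : Tendsto y atTop (𝓝 w))
    (hd : ∀ n, dist (x + t n • e n) (y n) ≤ ε) :
    w ∈ contributors E ε x ∧ 0 ≤ ⟪w - x, ζ⟫ := by
  have hwE : w ∈ E := hE.isClosed.mem_of_tendsto hy (Eventually.of_forall hyE)
  constructor
  · rw [mem_contributors_iff hE hε hx]
    refine ⟨hwE, le_antisymm ?_ (eps_le hx hwE)⟩
    have h1 : Tendsto (fun n => dist (x + t n • e n) (y n)) atTop (𝓝 (dist (x + (0:ℝ) • ζ) w)) :=
      (tendsto_const_nhds.add (ht0.smul he)).dist hy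
    have h2 := le_of_tendsto h1 (Eventually.of_forall hd)
    rw [zero_smul, add_zero, dist_comm, dist_eq_norm] at h2
    exact h2
  · have h1 : Tendsto (fun n => ⟪y n - x, e n⟫) atTop (𝓝 ⟪w - x, ζ⟫) :=
      (hy.sub_const x).inner he
    refine ge_of_tendsto h1 (Eventually.of_forall fun n => ?_)
    have h2 := hd n
    have h3 := eps_le hx (hyE n)
    rw [dist_comm, dist_eq_norm] at h2
    have h4 : y n - (x + t n • e n) = (y n - x) - t n • e n := by module
    rw [h4] at h2
    have h5 : ‖(y n - x) - t n • e n‖ ^ 2 ≤ ‖y n - x‖ ^ 2 :=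
      pow_le_pow_left₀ (norm_nonneg _) (h2.trans h3) 2
    rw [norm_sub_sq_real, inner_smul_right] at h5
    have h6 : 0 ≤ 2 * t n * ⟪y n - x, e n⟫ := by nlinarith [sq_nonneg ‖t n • e n‖]
    have := ht n
    by_contra hneg
    push Not at hneg
    nlinarith

lemma near_contrib {E : Set Plane} (hE : IsCompact E) {ε : ℝ} (hε : 0 < ε) {x : Plane}
    (hx : x ∈ frontier (eNbhd E ε)) {t : ℕ → ℝ} {e : ℕ → Plane} {ζ w : Plane}
    (ht : ∀ n, 0 < t n) (ht0 : Tendsto t atTop (𝓝 0)) (he : Tendsto e atTop (𝓝 ζ))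
    (hw : w ∈ contributors E ε x) (hpos : 0 < ⟪w - x, ζ⟫) :
    ∃ n, dist (x + t n • e n) w ≤ ε := by
  have h1 : Tendsto (fun n => 2 * ⟪w - x, e n⟫ - t n * ‖e n‖ ^ 2) atTop
      (𝓝 (2 * ⟪w - x, ζ⟫ - 0 * ‖ζ‖ ^ 2)) :=
    ((tendsto_const_nhds.inner he).const_mul 2).sub (ht0.mul (he.norm.pow 2))
  obtain ⟨n, hn⟩ := (h1.eventually (lt_mem_nhds (show 0 < _ by simpa using hpos))).exists
  refine ⟨n, ?_⟩
  rw [dist_comm, dist_eq_norm]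
  have h4 : w - (x + t n • e n) = (w - x) - t n • e n := by module
  rw [h4]
  refine (sq_le_sq₀ (norm_nonneg _) hε.le).1 ?_
  rw [norm_sub_sq_real, inner_smul_right, hw.2, norm_smul, Real.norm_of_nonneg (ht n).le]
  have := mul_pos (ht n) hn
  nlinarith

/-- a sequence tending to x can be put in polar form -/
lemma polar {x : Plane} {z : ℕ → Plane} (hz : Tendsto z atTop (𝓝 x)) (hne : ∀ n, z n ≠ x) :
    ∃ (φ : ℕ → ℕ) (ζ : Plane), StrictMono φ ∧ ‖ζ‖ = 1 ∧
      Tendsto (fun n => (‖z (φ n) - x‖)⁻¹ • (z (φ n) - x)) atTop (𝓝 ζ) := by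
  have h1 : ∀ n, (‖z n - x‖)⁻¹ • (z n - x) ∈ sphere (0 : Plane) 1 := by
    intro n
    have := norm_pos_iff.2 (sub_ne_zero.2 (hne n))
    rw [mem_sphere_zero_iff_norm, norm_smul, norm_inv, norm_norm]
    field_simp
  obtain ⟨ζ, h2, φ, h3, h4⟩ := (isCompact_sphere (0 : Plane) 1).tendsto_subseq h1
  exact ⟨φ, ζ, h3, by simpa using h2, h4⟩

lemma polar_eq {x z : Plane} (h : z ≠ x) : x + ‖z - x‖ • ((‖z - x‖)⁻¹ • (z - x)) = z := by
  have := norm_pos_iff.2 (sub_ne_zero.2 h)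
  rw [smul_smul, mul_inv_cancel₀ this.ne', one_smul]; abel

lemma x_mem {E : Set Plane} {ε : ℝ} {x : Plane}
    (hx : x ∈ frontier (eNbhd E ε)) : x ∈ eNbhd E ε := by
  have : IsClosed (eNbhd E ε) := isClosed_closure
  exact this.frontier_subset hx

lemma outward_nonpos {E : Set Plane} (hE : IsCompact E) {ε : ℝ} (hε : 0 < ε) {x : Plane}
    (hx : x ∈ frontier (eNbhd E ε)) {ξ w : Plane} (hξ : ξ ∈ outwardDirs E ε x)
    (hw : w ∈ contributors E ε x) : ⟪w - x, ξ⟫ ≤ 0 := by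
  by_contra hpos
  push Not at hpos
  obtain ⟨h1, u, hu, hux, hd⟩ := hξ
  have hne : ∀ n, u n ≠ x := fun n h => hu n (h ▸ x_mem hx)
  obtain ⟨n, hn⟩ := near_contrib hE hε hx (t := fun n => ‖u n - x‖)
    (fun n => norm_pos_iff.2 (sub_ne_zero.2 (hne n)))
    (by simpa using (hux.sub_const x).norm) hd hw hpos
  rw [polar_eq (hne n)] at hn
  exact hu n ((mem_eNbhd_iff hE hε _).2 ⟨w, ((mem_contributors_iff hE hε hx w).1 hw).1, hn⟩)

lemma strict_out {E : Set Plane} (hE : IsCompact E) {ε : ℝ} (hε : 0 < ε) {x : Plane}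
    (hx : x ∈ frontier (eNbhd E ε)) {v : Plane}
    (hv : ∀ w ∈ contributors E ε x, ⟪w - x, v⟫ < 0) {ρ : ℝ} (hρ : 0 < ρ) :
    ∃ t, 0 < t ∧ t < ρ ∧ x + t • v ∉ eNbhd E ε := by
  by_contra! hcon
  have ht : ∀ n : ℕ, 0 < ρ * (1 / ((n : ℝ) + 1)) / 2 := fun n => by positivity
  have ht1 : ∀ n : ℕ, ρ * (1 / ((n : ℝ) + 1)) / 2 < ρ := fun n => by
    have : 1 / ((n : ℝ) + 1) ≤ 1 := by
      rw [div_le_one (by positivity)]; linarith [(Nat.cast_nonneg n : (0:ℝ) ≤ n)]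
    nlinarith
  have h := fun n => (mem_eNbhd_iff hE hε _).1 (hcon _ (ht n) (ht1 n))
  choose y hyE hyd using h
  obtain ⟨w, hwE, φ, hφ, hlim⟩ := hE.tendsto_subseq hyE
  have ht0 : Tendsto (fun n : ℕ => ρ * (1 / ((n : ℝ) + 1)) / 2) atTop (𝓝 0) := by
    have := ((tendsto_one_div_add_atTop_nhds_zero_nat (𝕜 := ℝ)).const_mul ρ).div_const 2
    simpa using this
  have := limit_contrib hE hε hx (t := fun n => ρ * (1 / ((φ n : ℝ) + 1)) / 2) (e := fun _ => v)
    (y := y ∘ φ)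
    (fun n => ht _) (ht0.comp hφ.tendsto_atTop) tendsto_const_nhds (fun n => hyE _) hlim
    (fun n => hyd _)
  exact absurd (hv w this.1) (not_lt.2 this.2)

lemma edge_out {E : Set Plane} (hE : IsCompact E) {ε : ℝ} (hε : 0 < ε) {x : Plane}
    (hx : x ∈ frontier (eNbhd E ε)) {v η : Plane} (hη0 : η ≠ 0)
    (hη : ∀ w ∈ contributors E ε x, ⟪w - x, η⟫ ≤ 0)
    (hv : ∀ w ∈ contributors E ε x, ⟪w - x, v⟫ < 0) :
    ‖η‖⁻¹ • η ∈ outwardDirs E ε x := by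
  have hpos : 0 < ‖η‖ := norm_pos_iff.2 hη0
  refine ⟨by rw [norm_smul, norm_inv, norm_norm]; field_simp, ?_⟩
  have hc : ∀ n : ℕ, 0 < 1 / ((n : ℝ) + 1) := fun n => by positivity
  have h := fun n : ℕ => strict_out hE hε hx (v := η + (1 / ((n : ℝ) + 1)) • v) (by
    intro w hw
    rw [inner_add_right, inner_smul_right]
    have := mul_neg_of_pos_of_neg (hc n) (hv w hw)
    linarith [hη w hw]) (hc n)
  choose t ht0 ht1 htn using h
  have hlim0 := tendsto_one_div_add_atTop_nhds_zero_nat (𝕜 := ℝ)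
  have htl : Tendsto t atTop (𝓝 0) :=
    squeeze_zero (fun n => (ht0 n).le) (fun n => (ht1 n).le) hlim0
  have hel : Tendsto (fun n : ℕ => η + (1 / ((n : ℝ) + 1)) • v) atTop (𝓝 η) := by
    simpa using (hlim0.smul_const v).const_add η
  refine ⟨_, htn, ?_, ?_⟩
  · simpa using (htl.smul hel).const_add x
  · have h1 := (hel.norm.inv₀ hpos.ne').smul hel
    refine h1.congr fun n => ?_
    rw [add_sub_cancel_left, norm_smul, Real.norm_of_nonneg (ht0 n).le, smul_smul, mul_inv,
      mul_right_comm, inv_mul_cancel₀ (ht0 n).ne', one_mul]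

lemma inner_expand {ξ p : Plane} (h1 : ‖ξ‖ = 1) (h2 : ‖p‖ = 1) (h3 : ⟪p, ξ⟫ = 0) (v w : Plane) :
    ⟪v, w⟫ = ⟪v, ξ⟫ * ⟪w, ξ⟫ + ⟪v, p⟫ * ⟪w, p⟫ := by
  have e1 : ⟪ξ, ξ⟫ = 1 := by rw [real_inner_self_eq_norm_sq, h1]; norm_num
  have e2 : ⟪p, p⟫ = 1 := by rw [real_inner_self_eq_norm_sq, h2]; norm_num
  simp only [PiLp.inner_apply, Fin.sum_univ_two, RCLike.inner_apply, conj_trivial] at *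
  generalize ξ 0 = a at *
  generalize ξ 1 = b at *
  generalize p 0 = c at *
  generalize p 1 = d at *
  have k : (a * d - b * c) ^ 2 = 1 := by
    linear_combination (c * c + d * d) * e1 + e2 - (a * c + b * d) * h3
  have k1 : a * a + c * c = 1 := by
    grind
  have k2 : b * b + d * d = 1 := by
    linear_combination e1 + e2 - k1
  have k3 : a * b + c * d = 0 := by
    grind
  linear_combination (-(v 0 * w 0)) * k1 - (v 1 * w 1) * k2 - (v 0 * w 1 + v 1 * w 0) * k3

lemma exists_perp {ξ : Plane} (h1 : ‖ξ‖ = 1) : ∃ p : Plane, ‖p‖ = 1 ∧ ⟪p, ξ⟫ = 0 := by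
  have e1 : ⟪ξ, ξ⟫ = 1 := by rw [real_inner_self_eq_norm_sq, h1]; norm_num
  refine ⟨!₂[-ξ 1, ξ 0], ?_, ?_⟩
  · have : ⟪(!₂[-ξ 1, ξ 0] : Plane), !₂[-ξ 1, ξ 0]⟫ = 1 := by
      simp only [PiLp.inner_apply, Fin.sum_univ_two, RCLike.inner_apply, conj_trivial] at *
      simp
      linarith
    rw [real_inner_self_eq_norm_sq] at this
    nlinarith [norm_nonneg (!₂[-ξ 1, ξ 0] : Plane)]
  · simp only [PiLp.inner_apply, Fin.sum_univ_two, RCLike.inner_apply, conj_trivial] at *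
    simp
    ring

lemma contrib_compact {E : Set Plane} (hE : IsCompact E) {ε : ℝ} (hε : 0 < ε) {x : Plane}
    (hx : x ∈ frontier (eNbhd E ε)) :
    IsCompact (contributors E ε x) ∧ (contributors E ε x).Nonempty := by
  have h : contributors E ε x = E ∩ {y | ‖y - x‖ = ε} := by
    ext y; exact mem_contributors_iff hE hε hx y
  constructor
  · rw [h]
    exact hE.inter_right (isClosed_eq (by fun_prop) continuous_const)
  · obtain ⟨y, hy, hd⟩ := (mem_eNbhd_iff hE hε _).1 (x_mem hx)
    refine ⟨y, (mem_contributors_iff hE hε hx y).2 ⟨hy, le_antisymm ?_ (eps_le hx hy)⟩⟩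
    rwa [dist_comm, dist_eq_norm] at hd

/-- For a strict direction ξ and a perpendicular p there is an extremal direction on the p side. -/
lemma exists_edge {E : Set Plane} (hE : IsCompact E) {ε : ℝ} (hε : 0 < ε) {x : Plane}
    (hx : x ∈ frontier (eNbhd E ε)) {ξ p : Plane} (h1 : ‖ξ‖ = 1) (h2 : ‖p‖ = 1)
    (h3 : ⟪p, ξ⟫ = 0) (hs : ∀ w ∈ contributors E ε x, ⟪w - x, ξ⟫ < 0) :
    ∃ η ∈ extOutward E ε x, 0 < ⟪η, p⟫ := by
  obtain ⟨hc, hne⟩ := contrib_compact hE hε hx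
  obtain ⟨y, hy, hmax⟩ := hc.exists_isMaxOn hne (f := fun w => ⟪w - x, p⟫ / (-⟪w - x, ξ⟫))
    (ContinuousOn.div (by fun_prop) (by fun_prop) (fun w hw => by linarith [hs w hw]))
  have e1 : ⟪ξ, ξ⟫ = 1 := by rw [real_inner_self_eq_norm_sq, h1]; norm_num
  have e2 : ⟪p, p⟫ = 1 := by rw [real_inner_self_eq_norm_sq, h2]; norm_num
  have h3' : ⟪ξ, p⟫ = 0 := by rw [real_inner_comm]; exact h3
  set η : Plane := (-⟪y - x, ξ⟫) • p + ⟪y - x, p⟫ • ξ with hη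
  have hηp : ⟪η, p⟫ = -⟪y - x, ξ⟫ := by
    rw [hη, inner_add_left, real_inner_smul_left, real_inner_smul_left, e2, h3']; ring
  have hsy := hs y hy
  have hη0 : η ≠ 0 := by
    intro h; rw [h, inner_zero_left] at hηp; linarith
  have hpos : 0 < ‖η‖ := norm_pos_iff.2 hη0
  have hout := edge_out hE hε hx hη0 (v := ξ) (by
    intro w hw
    have hm : ⟪w - x, p⟫ / (-⟪w - x, ξ⟫) ≤ ⟪y - x, p⟫ / (-⟪y - x, ξ⟫) := hmax hw
    have hsw := hs w hw
    rw [div_le_div_iff₀ (by linarith) (by linarith)] at hm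
    rw [hη, inner_add_right, inner_smul_right, inner_smul_right]
    linarith) hs
  refine ⟨_, ⟨hout, y, hy, ?_⟩, ?_⟩
  · rw [inner_smul_right, hη, inner_add_right, inner_smul_right, inner_smul_right]; ring
  · rw [real_inner_smul_left, hηp]
    have := inv_pos.2 hpos
    nlinarith

lemma no_back {E : Set Plane} (hE : IsCompact E) {ε : ℝ} (hε : 0 < ε) {x : Plane}
    (hx : x ∈ frontier (eNbhd E ε)) {ξ₁ ξ₂ : Plane} (hext : extOutward E ε x = {ξ₁, ξ₂})
    {ξ : Plane} (hξ : ξ ∈ outwardDirs E ε x) (k1 : ⟪ξ, ξ₁⟫ ≤ 0) (k2 : ⟪ξ, ξ₂⟫ ≤ 0) :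
    ξ₂ = -ξ₁ := by
  have hk : ∀ η ∈ extOutward E ε x, ⟪η, ξ⟫ ≤ 0 := by
    intro η hη
    rw [hext] at hη
    rw [real_inner_comm]
    rcases hη with rfl | rfl <;> assumption
  have h1 := hξ.1
  have e1 : ⟪ξ, ξ⟫ = 1 := by rw [real_inner_self_eq_norm_sq, h1]; norm_num
  by_cases hex : ∃ w ∈ contributors E ε x, ⟪w - x, ξ⟫ = 0
  · have := hk ξ ⟨hξ, hex⟩
    linarith
  push Not at hex
  have hs : ∀ w ∈ contributors E ε x, ⟪w - x, ξ⟫ < 0 := fun w hw =>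
    lt_of_le_of_ne (outward_nonpos hE hε hx hξ hw) (hex w hw)
  obtain ⟨p, h2, h3⟩ := exists_perp h1
  obtain ⟨a, ha, hap⟩ := exists_edge hE hε hx h1 h2 h3 hs
  obtain ⟨b, hb, hbp⟩ := exists_edge hE hε hx h1 (p := -p) (by rwa [norm_neg])
    (by rw [inner_neg_left, h3, neg_zero]) hs
  rw [inner_neg_right] at hbp
  have hab : a ≠ b := by rintro rfl; linarith
  have hax := hk a ha
  have hbx := hk b hb
  have ha1 := ha.1.1
  have hb1 := hb.1.1
  have X := inner_expand h1 h2 h3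
  -- contributors perpendicular to a and b
  obtain ⟨wa, hwa, pa⟩ := ha.2
  obtain ⟨wb, hwb, pb⟩ := hb.2
  have qa := outward_nonpos hE hε hx ha.1 hwb
  have qb := outward_nonpos hE hε hx hb.1 hwa
  have sa := hs wa hwa
  have sb := hs wb hwb
  have naa : ⟪a, a⟫ = 1 := by rw [real_inner_self_eq_norm_sq, ha1]; norm_num
  have nbb : ⟪b, b⟫ = 1 := by rw [real_inner_self_eq_norm_sq, hb1]; norm_num
  have hba : b = -a := by
    have : ⟪b + a, b + a⟫ = 0 := by
      rw [X] at pa pb qa qb naa nbb ⊢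
      simp only [inner_add_left]
      generalize ⟪a, ξ⟫ = aξ at *
      generalize ⟪b, ξ⟫ = bξ at *
      generalize ⟪a, p⟫ = ap at *
      generalize ⟪b, p⟫ = bp at *
      generalize ⟪wa - x, ξ⟫ = c at *
      generalize ⟪wa - x, p⟫ = d at *
      generalize ⟪wb - x, ξ⟫ = c' at *
      generalize ⟪wb - x, p⟫ = d' at *
      have u1 : 0 ≤ c' * aξ := mul_nonneg_of_nonpos_of_nonpos sb.le hax
      have u2 : 0 ≤ c' * bξ := mul_nonneg_of_nonpos_of_nonpos sb.le hbx
      have v1 : 0 ≤ d' := by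
        by_contra hh
        push Not at hh
        nlinarith
      have v2 : d' * ap = 0 := le_antisymm (by linarith) (by positivity)
      have v3 : d' = 0 := (mul_eq_zero.1 v2).resolve_right hap.ne'
      subst v3
      have w1 : aξ = 0 := by
        have : c' * aξ = 0 := by linarith
        exact (mul_eq_zero.1 this).resolve_left sb.ne
      have w2 : bξ = 0 := by
        have : c' * bξ = 0 := by linarith
        exact (mul_eq_zero.1 this).resolve_left sb.ne
      subst w1 w2
      have : ap = 1 := by nlinarith
      have : bp = -1 := by nlinarith
      subst ap bp
      norm_num
    have := inner_self_eq_zero.1 this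
    exact eq_neg_of_add_eq_zero_left this
  rw [hext] at ha hb
  rcases ha with rfl | ha <;> rcases hb with hb | hb
  · exact absurd hb.symm hab
  · rw [← hba]; exact (hb : b = _).symm
  · rw [← (ha : a = _), ← hb, hba, neg_neg]
  · exact absurd ((ha : a = _).trans (hb : b = _).symm) hab

set_option maxHeartbeats 1000000 in
lemma no_cover {E : Set Plane} (hE : IsCompact E) {ε : ℝ} (hε : 0 < ε) {x : Plane}
    (hx : x ∈ frontier (eNbhd E ε)) {ξ ζ y : Plane} (hξ : ξ ∈ extOutward E ε x)
    (hζ : ‖ζ‖ = 1) (hζξ : 0 ≤ ⟪ζ, ξ⟫) (hy : y ∈ contributors E ε x)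
    (hyn : y ∉ extContrib E ε x) (hζy : 0 ≤ ⟪y - x, ζ⟫)
    (hw : ∀ w ∈ extContrib E ε x, ⟪w - x, ζ⟫ ≤ 0) : False := by
  obtain ⟨hξo, w, hwc, hwξ⟩ := hξ
  have hwe : w ∈ extContrib E ε x := ⟨hwc, ξ, hξo, hwξ⟩
  have h1 := hξo.1
  obtain ⟨p, hp⟩ : ∃ p : Plane, p = ε⁻¹ • (w - x) := ⟨_, rfl⟩
  have hwp : w - x = ε • p := by rw [hp, smul_smul, mul_inv_cancel₀ hε.ne', one_smul]
  have h2 : ‖p‖ = 1 := by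
    rw [hp, norm_smul, hwc.2, norm_inv, Real.norm_of_nonneg hε.le, inv_mul_cancel₀ hε.ne']
  have h3 : ⟪p, ξ⟫ = 0 := by rw [hp, real_inner_smul_left, hwξ, mul_zero]
  have h3' : ⟪ξ, p⟫ = 0 := by rw [real_inner_comm]; exact h3
  have e1 : ⟪ξ, ξ⟫ = 1 := by rw [real_inner_self_eq_norm_sq, h1]; norm_num
  have e2 : ⟪p, p⟫ = 1 := by rw [real_inner_self_eq_norm_sq, h2]; norm_num
  have X := inner_expand h1 h2 h3
  have nz : ⟪ζ, ξ⟫ * ⟪ζ, ξ⟫ + ⟪ζ, p⟫ * ⟪ζ, p⟫ = 1 := by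
    rw [← X, real_inner_self_eq_norm_sq, hζ]; norm_num
  have nc : ∀ c ∈ contributors E ε x,
      ⟪c - x, ξ⟫ * ⟪c - x, ξ⟫ + ⟪c - x, p⟫ * ⟪c - x, p⟫ = ε ^ 2 := by
    intro c hc
    rw [← X, real_inner_self_eq_norm_sq, hc.2]
  have hb : ⟪ζ, p⟫ ≤ 0 := by
    have := hw w hwe
    rw [hwp, real_inner_smul_left, real_inner_comm] at this
    by_contra hh
    push Not at hh
    nlinarith
  have nonpos := fun c hc => outward_nonpos hE hε hx hξo (w := c) hc
  have hys : ⟪y - x, ξ⟫ < 0 := lt_of_le_of_ne (nonpos y hy) (fun h => hyn ⟨hy, ξ, hξo, h⟩)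
  rw [X] at hζy
  have hb' : ⟪ζ, p⟫ < 0 := by
    refine lt_of_le_of_ne hb fun h => ?_
    rw [h] at hζy nz
    nlinarith
  have hyt : ⟪y - x, p⟫ ≤ 0 := by
    by_contra hh
    push Not at hh
    nlinarith
  -- -w is not a contributor
  have hnw : ∀ c ∈ contributors E ε x, ⟪c - x, ξ⟫ = 0 → 0 < ⟪c - x, p⟫ := by
    intro c hc h0
    by_contra hh
    push Not at hh
    have k := nc c hc
    have := hw c ⟨hc, ξ, hξo, h0⟩
    rw [X] at this
    rw [h0] at this k
    have : ⟪c - x, p⟫ < 0 := lt_of_le_of_ne hh (fun h => by rw [h] at k; nlinarith)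
    nlinarith
  obtain ⟨hcc, hne⟩ := contrib_compact hE hε hx
  obtain ⟨c, hc, hmin⟩ := hcc.exists_isMinOn hne (f := fun w => ⟪w - x, p⟫) (by fun_prop)
  have hcy : ⟪c - x, p⟫ ≤ ⟪y - x, p⟫ := hmin hy
  have hcs : ⟪c - x, ξ⟫ < 0 := by
    refine lt_of_le_of_ne (nonpos c hc) fun h => ?_
    linarith [hnw c hc h]
  have kc := nc c hc
  set s := ⟪c - x, ξ⟫ with hs
  set t := ⟪c - x, p⟫ with ht
  -- the new extremal direction
  obtain ⟨η, hη⟩ : ∃ η : Plane, η = (-t) • ξ + s • p := ⟨_, rfl⟩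
  have ηξ : ⟪η, ξ⟫ = -t := by
    rw [hη, inner_add_left, real_inner_smul_left, real_inner_smul_left, e1, h3]; ring
  have ηp : ⟪η, p⟫ = s := by
    rw [hη, inner_add_left, real_inner_smul_left, real_inner_smul_left, e2, h3']; ring
  have hη0 : η ≠ 0 := by
    intro h; rw [h, inner_zero_left] at ηp; linarith
  have ηle : ∀ d ∈ contributors E ε x, ⟪d - x, η⟫ ≤ 0 := by
    intro d hd
    rw [X, ηξ, ηp]
    have hd1 : t ≤ ⟪d - x, p⟫ := hmin hd
    have hd2 := nonpos d hd
    have hd3 := nc d hd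
    rcases le_or_gt 0 ⟪d - x, p⟫ with h | h
    · nlinarith
    · have : ⟪d - x, ξ⟫ ≤ s := by
        by_contra hh
        push Not at hh
        nlinarith
      nlinarith
  have hout := edge_out hE hε hx hη0 (v := ξ + η) ηle (by
    intro d hd
    rw [inner_add_right]
    have q1 := nonpos d hd
    have q2 := ηle d hd
    rcases q1.lt_or_eq with q | q
    · linarith
    · have := hnw d hd q
      rw [X (d - x) η, ηξ, ηp, q]
      nlinarith)
  have hce : c ∈ extContrib E ε x := by
    refine ⟨hc, _, hout, ?_⟩
    rw [inner_smul_right, X, ηξ, ηp, ← hs, ← ht]; ring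
  have hfin := hw c hce
  rw [X, ← hs, ← ht] at hfin
  have ky := nc y hy
  have hsy : ⟪y - x, ξ⟫ ≤ s := by
    by_contra hh
    push Not at hh
    nlinarith
  have g1 : ⟪y - x, p⟫ = t := by
    by_contra hne
    have : t < ⟪y - x, p⟫ := lt_of_le_of_ne hcy (Ne.symm hne)
    nlinarith
  have g2 : ⟪y - x, ξ⟫ = s := by
    rw [g1] at ky
    nlinarith
  have : y = c := by
    have : ⟪y - c, y - c⟫ = 0 := by
      have r : y - c = (y - x) - (c - x) := by abel
      rw [X, r, inner_sub_left (y - x) (c - x) ξ, inner_sub_left (y - x) (c - x) p, g1, g2, ← hs, ← ht]; ring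
    exact sub_eq_zero.1 (inner_self_eq_zero.1 this)
  exact hyn (this ▸ hce)

lemma mem_closure_halfBall {x v z : Plane} {r : ℝ} (hv : ‖v‖ = 1) (hz : z ∈ ball x r) :
    z ∈ closure (halfBall x v r) ↔ 0 ≤ ⟪z - x, v⟫ := by
  constructor
  · intro h
    have hcl : IsClosed {z : Plane | 0 ≤ ⟪z - x, v⟫} :=
      isClosed_le continuous_const (by fun_prop)
    exact closure_minimal (fun a (ha : a ∈ halfBall x v r) => ha.2.le) hcl h
  · intro h
    have hc : Tendsto (fun t : ℝ => z + t • v) (𝓝[>] 0) (𝓝 z) := by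
      have : ContinuousAt (fun t : ℝ => z + t • v) 0 := by fun_prop
      have h3 := this.tendsto
      simp only [zero_smul, add_zero] at h3
      exact h3.mono_left nhdsWithin_le_nhds
    refine mem_closure_of_tendsto hc ?_
    filter_upwards [hc.eventually (isOpen_ball.mem_nhds hz), self_mem_nhdsWithin] with t h1 h2
    refine ⟨h1, ?_⟩
    have : z + t • v - x = (z - x) + t • v := by abel
    rw [this, inner_add_left, real_inner_smul_left, real_inner_self_eq_norm_sq, hv]
    have : (0:ℝ) < t := h2
    linarith

/-- Local contribution: near `x`, membership of `E_ε` is decided either by lying outside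
both closed half-balls in the extremal outward directions, or by lying in the closed
ε-neighbourhood of the part of `E` within distance `δ` of the extremal contributors. -/
theorem local_contribution (E : Set Plane) (hE : IsCompact E) {ε : ℝ} (hε : 0 < ε)
    (x : Plane) (hx : x ∈ frontier (eNbhd E ε)) (ξ₁ ξ₂ : Plane)
    (hext : extOutward E ε x = {ξ₁, ξ₂}) :
    ∀ δ > 0, ∃ r > 0, ∀ z ∈ ball x r,
      (z ∈ eNbhd E ε ↔
        (z ∉ closure (halfBall x ξ₁ r) ∪ closure (halfBall x ξ₂ r)) ∨
        z ∈ closure (⋃ y ∈ {y ∈ E | ∃ w ∈ extContrib E ε x, dist y w < δ}, ball y ε)) := by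
  intro δ hδ
  have hm1 : ξ₁ ∈ extOutward E ε x := by rw [hext]; simp
  have hm2 : ξ₂ ∈ extOutward E ε x := by rw [hext]; simp
  have n1 := hm1.1.1
  have n2 := hm2.1.1
  set F : Set Plane := {y ∈ E | ∃ w ∈ extContrib E ε x, dist y w < δ} with hF
  have hFm : ∀ y ∈ F, ∀ z, dist z y ≤ ε → z ∈ closure (⋃ y ∈ F, ball y ε) := by
    intro y hy z hd
    have h1 : z ∈ closure (ball y ε) := by
      rw [closure_ball y hε.ne']; exact hd
    exact closure_mono (subset_biUnion_of_mem (u := fun y => ball y ε) hy) h1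
  have hextF : ∀ w ∈ extContrib E ε x, w ∈ F := fun w hw =>
    ⟨((mem_contributors_iff hE hε hx w).1 hw.1).1, w, hw, by simpa using hδ⟩
  have hFE : closure (⋃ y ∈ F, ball y ε) ⊆ eNbhd E ε :=
    closure_mono (biUnion_subset_biUnion_left fun y hy => hy.1)
  -- first half
  have A : ∃ r > 0, ∀ z ∈ ball x r, ⟪z - x, ξ₁⟫ < 0 → ⟪z - x, ξ₂⟫ < 0 → z ∈ eNbhd E ε := by
    by_contra! hcon
    have h := fun n : ℕ => hcon (1 / ((n : ℝ) + 1)) (by positivity)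
    choose z hzb hz1 hz2 hzn using h
    have hlim : Tendsto z atTop (𝓝 x) := by
      rw [tendsto_iff_dist_tendsto_zero]
      exact squeeze_zero (fun n => dist_nonneg) (fun n => (mem_ball.1 (hzb n)).le)
        (tendsto_one_div_add_atTop_nhds_zero_nat (𝕜 := ℝ))
    have hne : ∀ n, z n ≠ x := fun n h => hzn n (h ▸ x_mem hx)
    obtain ⟨φ, ζ, hφ, hζ, hd⟩ := polar hlim hne
    have hout : ζ ∈ outwardDirs E ε x :=
      ⟨hζ, z ∘ φ, fun n => hzn _, hlim.comp hφ.tendsto_atTop, hd⟩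
    have key : ∀ ξ : Plane, (∀ n, ⟪z n - x, ξ⟫ < 0) → ⟪ζ, ξ⟫ ≤ 0 := by
      intro ξ h
      have h1 : Tendsto (fun n => ⟪(‖z (φ n) - x‖)⁻¹ • (z (φ n) - x), ξ⟫) atTop (𝓝 ⟪ζ, ξ⟫) :=
        hd.inner tendsto_const_nhds
      refine le_of_tendsto h1 (Eventually.of_forall fun n => ?_)
      rw [real_inner_smul_left]
      exact mul_nonpos_of_nonneg_of_nonpos (by positivity) (h _).le
    have := no_back hE hε hx hext hout (key _ hz1) (key _ hz2)
    have a1 := hz1 0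
    have a2 := hz2 0
    rw [this, inner_neg_right] at a2
    linarith
  -- second half
  have B : ∀ ξ ∈ extOutward E ε x, ∃ r > 0, ∀ z ∈ ball x r, 0 ≤ ⟪z - x, ξ⟫ → z ∈ eNbhd E ε →
      z ∈ closure (⋃ y ∈ F, ball y ε) := by
    intro ξ hξ
    by_contra! hcon
    have h := fun n : ℕ => hcon (1 / ((n : ℝ) + 1)) (by positivity)
    choose z hzb hz1 hz2 hzn using h
    have hlim : Tendsto z atTop (𝓝 x) := by
      rw [tendsto_iff_dist_tendsto_zero]
      exact squeeze_zero (fun n => dist_nonneg) (fun n => (mem_ball.1 (hzb n)).le)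
        (tendsto_one_div_add_atTop_nhds_zero_nat (𝕜 := ℝ))
    have hne : ∀ n, z n ≠ x := by
      intro n h
      obtain ⟨hξo, w, hwc, hwξ⟩ := hξ
      apply hzn n
      rw [h]
      refine hFm w (hextF w ⟨hwc, ξ, hξo, hwξ⟩) x ?_
      rw [dist_comm, dist_eq_norm, hwc.2]
    obtain ⟨φ, ζ, hφ, hζ, hd⟩ := polar hlim hne
    have h := fun n => (mem_eNbhd_iff hE hε _).1 (hz2 (φ n))
    choose y hyE hyd using h
    obtain ⟨w, hwE, ψ, hψ, hyl⟩ := hE.tendsto_subseq hyE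
    have hlim' : Tendsto (fun n => z (φ (ψ n))) atTop (𝓝 x) :=
      hlim.comp (hφ.tendsto_atTop.comp hψ.tendsto_atTop)
    have hd' := hd.comp hψ.tendsto_atTop
    have ht : ∀ n, 0 < ‖z (φ (ψ n)) - x‖ := fun n => norm_pos_iff.2 (sub_ne_zero.2 (hne _))
    have ht0 : Tendsto (fun n => ‖z (φ (ψ n)) - x‖) atTop (𝓝 0) := by
      simpa using (hlim'.sub_const x).norm
    obtain ⟨hwc, hwζ⟩ := limit_contrib hE hε hx ht ht0 hd' (fun n => hyE (ψ n)) hyl (by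
      intro n
      simp only [Function.comp]
      rw [polar_eq (hne _)]
      exact hyd _)
    refine no_cover hE hε hx hξ hζ ?_ hwc ?_ hwζ ?_
    · have h1 : Tendsto (fun n => ⟪(‖z (φ n) - x‖)⁻¹ • (z (φ n) - x), ξ⟫) atTop (𝓝 ⟪ζ, ξ⟫) :=
        hd.inner tendsto_const_nhds
      refine ge_of_tendsto h1 (Eventually.of_forall fun n => ?_)
      rw [real_inner_smul_left]
      exact mul_nonneg (by positivity) (hz1 _)
    · intro hwe
      obtain ⟨n, hn⟩ := (hyl.eventually (ball_mem_nhds w hδ)).exists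
      exact hzn _ (hFm (y (ψ n)) ⟨hyE _, w, hwe, hn⟩ _ (hyd _))
    · intro c hc
      by_contra hpos
      push Not at hpos
      obtain ⟨n, hn⟩ := near_contrib hE hε hx ht ht0 hd' hc.1 hpos
      simp only [Function.comp] at hn
      rw [polar_eq (hne _)] at hn
      exact hzn _ (hFm c (hextF c hc) _ hn)
  obtain ⟨r0, hr0, H0⟩ := A
  obtain ⟨r1, hr1, H1⟩ := B ξ₁ hm1
  obtain ⟨r2, hr2, H2⟩ := B ξ₂ hm2
  refine ⟨min r0 (min r1 r2), by positivity, fun z hz => ?_⟩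
  have b0 : z ∈ ball x r0 := ball_subset_ball (min_le_left _ _) hz
  have b1 : z ∈ ball x r1 := ball_subset_ball ((min_le_right _ _).trans (min_le_left _ _)) hz
  have b2 : z ∈ ball x r2 := ball_subset_ball ((min_le_right _ _).trans (min_le_right _ _)) hz
  rw [mem_union, mem_closure_halfBall n1 hz, mem_closure_halfBall n2 hz]
  constructor
  · intro h
    by_cases hh : 0 ≤ ⟪z - x, ξ₁⟫ ∨ 0 ≤ ⟪z - x, ξ₂⟫
    · right
      rcases hh with hh | hh
      · exact H1 z b1 hh h
      · exact H2 z b2 hh h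
    · exact Or.inl hh
  · rintro (h | h)
    · push Not at h
      exact H0 z b0 h.1 h.2
    · exact hFE h

end
end
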